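/- Let ∅ ≠ L ⊆ M ⊊ N ⊆ V and suppose 𝔛_N is collapsible over N∖M into 𝔛_M with respect to λ_L^N, i.e., λ_L^M(x_L) = λ_L^N(x_L) for all x_L. Then 𝔛_N is strictly collapsible with respect to λ_L^N (i.e., in addition λ_Z^N(x_Z) = 0 for every Z ⊆ N with L ⊊ Z and Z ∩ (N∖M) ≠ ∅) if and only if for every x_N ∈ 𝔛_N: Σ_{Z ⊆ L} (−1)^{|L∖Z|} ν_{Z∪(N∖L)}^N(x_Z, x_{N∖L}) = Σ_{Z ⊆ L} (−1)^{|L∖Z|} ν_{Z∪(M∖L)}^N(x_Z, x_{M∖L}). -/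

import Mathlib

/-!
For a fixed table `N` put `f = log p_N`, and let `E A f` (`condMean A f`) be the average of `f` over
the coordinates outside `A`, so that `ν_A^N = E A f` and `E A ∘ E B = E (A ∩ B)`. The transform
`λ Z = ∑_{A ⊆ Z} (-1)^|Z ∖ A| E A` is then a family of orthogonal idempotents (the Hoeffding, or
functional ANOVA, decomposition), and the alternating sum `∑_{Z ⊆ L} (-1)^|L ∖ Z| E (Z ∪ (N ∖ L))`
telescopes to `∑_{L ⊆ W ⊆ N} λ W`. Hence the displayed identity says that the sum of `λ W f` over
the `W` with `L ⊆ W ⊆ N` and `W ⊄ M` vanishes; by orthogonality every summand vanishes.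
-/

open Finset

variable {V : Type*} [Fintype V] [DecidableEq V]
variable {𝔛 : V → Type*} [∀ v, Fintype (𝔛 v)] [∀ v, DecidableEq (𝔛 v)]
  [∀ v, Nonempty (𝔛 v)]

/-- The marginal `p_A` of a distribution `p` on the full table, evaluated at the
`A`-coordinates of `x`. -/
noncomputable def margin (p : (∀ v, 𝔛 v) → ℝ) (A : Finset V) (x : ∀ v, 𝔛 v) : ℝ :=
  ∑ y ∈ Finset.univ.filter (fun y : ∀ v, 𝔛 v => ∀ v ∈ A, y v = x v), p y

/-- `ν_L^M(x_L) = (1/|𝔛_{M∖L}|) Σ_{j ∈ 𝔛_M : j_L = x_L} log p_M(j)`, written with sums over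
full configurations (for `L ⊆ M` the extra coordinates cancel against the normalization). -/
noncomputable def nu (p : (∀ v, 𝔛 v) → ℝ) (L M : Finset V) (x : ∀ v, 𝔛 v) : ℝ :=
  (∏ v ∈ Lᶜ, (Fintype.card (𝔛 v) : ℝ))⁻¹ *
    ∑ j ∈ Finset.univ.filter (fun j : ∀ v, 𝔛 v => ∀ v ∈ L, j v = x v),
      Real.log (margin p M j)

/-- The marginal log-linear parameter `λ_L^M(x_L) = Σ_{L' ⊆ L} (−1)^{|L∖L'|} ν_{L'}^M(x_{L'})`. -/
noncomputable def mll (p : (∀ v, 𝔛 v) → ℝ) (L M : Finset V) (x : ∀ v, 𝔛 v) : ℝ :=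
  ∑ L' ∈ L.powerset, (-1 : ℝ) ^ ((L \ L').card) * nu p L' M x


section MoebiusTransform

variable {ι G : Type*} [DecidableEq ι] [AddCommGroup G]

/-- The Möbius transform `L ↦ ∑_{Z ⊆ L} (-1)^|L ∖ Z| g(Z)` of a function `g` of finite sets; it
carries the averages `ν` to the interactions `λ`. -/
def moebiusTransform (g : Finset ι → G) (L : Finset ι) : G :=
  ∑ Z ∈ L.powerset, (-1 : ℤ) ^ #(L \ Z) • g Z

theorem moebiusTransform_congr {g h : Finset ι → G} {L : Finset ι} (hgh : ∀ Z ⊆ L, g Z = h Z) :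
    moebiusTransform g L = moebiusTransform h L :=
  sum_congr rfl fun Z hZ => by rw [hgh Z (mem_powerset.1 hZ)]

theorem moebiusTransform_insert (g : Finset ι → G) {L : Finset ι} {a : ι} (ha : a ∉ L) :
    moebiusTransform g (insert a L) =
      moebiusTransform (fun Z => g (insert a Z)) L - moebiusTransform g L := by
  simp only [moebiusTransform]
  rw [sum_powerset_insert ha, add_comm, sub_eq_add_neg, ← sum_neg_distrib]
  congr 1 <;> refine sum_congr rfl fun Z hZ => ?_
  · rw [insert_sdiff_insert, sdiff_insert_of_notMem ha]
  · have haZ : a ∉ Z := fun h => ha (mem_powerset.1 hZ h)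
    rw [insert_sdiff_of_notMem _ haZ, card_insert_of_notMem (by simp [ha]), pow_succ, mul_neg_one,
      neg_smul]

theorem moebiusTransform_union_right (g : Finset ι → G) {L A : Finset ι} (hLA : Disjoint L A) :
    moebiusTransform (fun Z => g (Z ∪ A)) L = ∑ B ∈ A.powerset, moebiusTransform g (L ∪ B) := by
  induction A using Finset.induction_on generalizing L with
  | empty => simp
  | insert a A ha ih =>
    obtain ⟨haL, hLA⟩ := disjoint_insert_right.1 hLA
    have hstep := moebiusTransform_insert (fun Z => g (Z ∪ A)) haL
    rw [ih (disjoint_insert_left.2 ⟨ha, hLA⟩), ih hLA, eq_sub_iff_add_eq'] at hstep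
    simp only [sum_powerset_insert ha, union_insert, ← insert_union, hstep]

theorem moebiusTransform_union_sdiff (g : Finset ι → G) {L N : Finset ι} (hLN : L ⊆ N) :
    moebiusTransform (fun Z => g (Z ∪ (N \ L))) L = ∑ W ∈ Icc L N, moebiusTransform g W := by
  have hinj : Set.InjOn (L ∪ ·) ((N \ L).powerset : Set (Finset ι)) := by
    intro B hB C hC hBC
    rw [mem_coe, mem_powerset, subset_sdiff] at hB hC
    rw [← union_sdiff_cancel_left hB.2.symm, ← union_sdiff_cancel_left hC.2.symm]
    exact congrArg (· \ L) hBC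
  rw [moebiusTransform_union_right g disjoint_sdiff, Icc_eq_image_powerset hLN, sum_image hinj]

theorem moebiusTransform_end_apply {X 𝕜 : Type*} [Ring 𝕜]
    (T : Finset ι → Module.End 𝕜 (X → 𝕜)) (L : Finset ι) (f : X → 𝕜) (x : X) :
    moebiusTransform T L f x = ∑ Z ∈ L.powerset, (-1 : 𝕜) ^ #(L \ Z) * T Z f x := by
  simp only [moebiusTransform, LinearMap.sum_apply, LinearMap.smul_apply, Finset.sum_apply,
    Pi.smul_apply]
  simp only [zsmul_eq_mul, Int.cast_pow, Int.cast_neg, Int.cast_one]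

end MoebiusTransform

section Projections

variable {ι R : Type*} [DecidableEq ι] [Ring R] {P : Finset ι → R}

theorem mul_moebiusTransform (a : R) (g : Finset ι → R) (L : Finset ι) :
    a * moebiusTransform g L = moebiusTransform (fun Z => a * g Z) L := by
  simp only [moebiusTransform, mul_sum, mul_smul_comm]

theorem moebiusTransform_mul (g : Finset ι → R) (L : Finset ι) (a : R) :
    moebiusTransform g L * a = moebiusTransform (fun Z => g Z * a) L := by
  simp only [moebiusTransform, sum_mul, smul_mul_assoc]

theorem mul_moebiusTransform_of_subset (hP : ∀ A B, P A * P B = P (A ∩ B)) {A Z : Finset ι}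
    (hZA : Z ⊆ A) : P A * moebiusTransform P Z = moebiusTransform P Z := by
  rw [mul_moebiusTransform]
  exact moebiusTransform_congr fun B hB => by rw [hP, inter_eq_right.2 (hB.trans hZA)]

theorem mul_moebiusTransform_of_not_subset (hP : ∀ A B, P A * P B = P (A ∩ B)) {A Z : Finset ι}
    (hZA : ¬ Z ⊆ A) : P A * moebiusTransform P Z = 0 := by
  obtain ⟨a, haZ, haA⟩ := not_subset.1 hZA
  rw [mul_moebiusTransform, ← insert_erase haZ, moebiusTransform_insert _ (notMem_erase a Z)]
  simp only [hP, inter_insert_of_notMem haA, sub_self]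

theorem commute_moebiusTransform (hP : ∀ A B, P A * P B = P (A ∩ B)) (A Z : Finset ι) :
    Commute (P A) (moebiusTransform P Z) := by
  rw [commute_iff_eq, mul_moebiusTransform, moebiusTransform_mul]
  simp only [hP, inter_comm A]

theorem orthogonalIdempotents_moebiusTransform (hP : ∀ A B, P A * P B = P (A ∩ B)) :
    OrthogonalIdempotents (moebiusTransform P) where
  idem Z := by
    rw [IsIdempotentElem, moebiusTransform_mul, moebiusTransform,
      sum_eq_single_of_mem Z (mem_powerset_self Z)]
    · simp [mul_moebiusTransform_of_subset hP]
    · intro A hA hAZ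
      have hZA : ¬ Z ⊆ A := fun h => hAZ ((mem_powerset.1 hA).antisymm h)
      rw [mul_moebiusTransform_of_not_subset hP hZA, smul_zero]
  ortho := by
    have hortho {Z W : Finset ι} (hWZ : ¬ W ⊆ Z) :
        moebiusTransform P Z * moebiusTransform P W = 0 := by
      rw [moebiusTransform_mul, moebiusTransform]
      refine sum_eq_zero fun A hA => ?_
      have hWA : ¬ W ⊆ A := fun h => hWZ (h.trans (mem_powerset.1 hA))
      rw [mul_moebiusTransform_of_not_subset hP hWA, smul_zero]
    have hcomm (Z W : Finset ι) : Commute (moebiusTransform P Z) (moebiusTransform P W) := by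
      rw [commute_iff_eq, moebiusTransform_mul, mul_moebiusTransform]
      simp only [(commute_moebiusTransform hP _ W).eq]
    intro Z W hZW
    by_cases hWZ : W ⊆ Z
    · exact (hcomm Z W).eq.trans (hortho fun h => hZW (h.antisymm hWZ))
    · exact hortho hWZ

end Projections

theorem sum_orthogonalIdempotents_apply_eq_zero_iff {I R E : Type*} [Semiring R] [AddCommMonoid E]
    [Module R E] {e : I → Module.End R E} (he : OrthogonalIdempotents e) (s : Finset I) (f : E) :
    ∑ i ∈ s, e i f = 0 ↔ ∀ i ∈ s, e i f = 0 := by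
  refine ⟨fun h i hi => ?_, sum_eq_zero⟩
  calc e i f = (e i * ∑ j ∈ s, e j) f := by rw [he.mul_sum_of_mem hi]
    _ = e i (∑ j ∈ s, e j f) := by rw [Module.End.mul_apply, LinearMap.sum_apply]
    _ = 0 := by rw [h, map_zero]

theorem stmt9_general {ι R E : Type*} [DecidableEq ι] [Semiring R] [AddCommGroup E] [Module R E]
    {P : Finset ι → Module.End R E} (hP : ∀ A B, P A * P B = P (A ∩ B)) (f : E)
    {L M N : Finset ι} (hLM : L ⊆ M) (hMN : M ⊆ N) :
    (∀ Z ⊆ N, L ⊂ Z → (Z ∩ (N \ M)).Nonempty → moebiusTransform P Z f = 0) ↔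
      moebiusTransform (fun Z => P (Z ∪ (N \ L))) L f =
        moebiusTransform (fun Z => P (Z ∪ (M \ L))) L f := by
  have hmem (Z : Finset ι) : Z ∈ Icc L N \ Icc L M ↔ Z ⊆ N ∧ L ⊂ Z ∧ (Z ∩ (N \ M)).Nonempty := by
    have hne (hZN : Z ⊆ N) : (Z ∩ (N \ M)).Nonempty ↔ ¬ Z ⊆ M := by
      rw [← inter_sdiff_assoc, inter_eq_left.2 hZN, sdiff_nonempty]
    have hss (hLZ : L ⊆ Z) (hZM : ¬ Z ⊆ M) : L ⊂ Z := ⟨hLZ, fun h => hZM (h.trans hLM)⟩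
    have hsub : L ⊂ Z → L ⊆ Z := fun h => h.subset
    simp only [mem_sdiff, mem_Icc]
    tauto
  rw [moebiusTransform_union_sdiff P (hLM.trans hMN), moebiusTransform_union_sdiff P hLM,
    LinearMap.sum_apply, LinearMap.sum_apply, ← sub_eq_zero,
    ← sum_sdiff_eq_sub (Icc_subset_Icc_right hMN),
    sum_orthogonalIdempotents_apply_eq_zero_iff (orthogonalIdempotents_moebiusTransform hP)]
  simp only [hmem, and_imp]

section Averages

variable {ι 𝕜 : Type*} [Fintype ι] [DecidableEq ι] [Field 𝕜]
variable {X : ι → Type*} [∀ i, Fintype (X i)] [∀ i, DecidableEq (X i)]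

/-- The cylinder of configurations that agree with `x` on `A`, the domain of summation of `ν_A`. -/
def cylinder (A : Finset ι) (x : ∀ i, X i) : Finset (∀ i, X i) :=
  univ.filter fun j => ∀ i ∈ A, j i = x i

theorem mem_cylinder {A : Finset ι} {x j : ∀ i, X i} :
    j ∈ cylinder A x ↔ ∀ i ∈ A, j i = x i := by
  simp [cylinder]

theorem card_cylinder (A : Finset ι) (x : ∀ i, X i) :
    #(cylinder A x) = ∏ i ∈ Aᶜ, Fintype.card (X i) := by
  have h : cylinder A x = Fintype.piFinset fun i => if i ∈ A then {x i} else univ := by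
    ext j
    simp only [mem_cylinder, Fintype.mem_piFinset]
    grind
  rw [h, Fintype.card_piFinset, ← prod_mul_prod_compl A, prod_eq_one fun i hi => by simp [hi],
    one_mul]
  exact prod_congr rfl fun i hi => by simp [mem_compl.1 hi]

theorem sum_cylinder_sum_cylinder {S : Type*} [Semiring S] (A B : Finset ι) (f : (∀ i, X i) → S)
    (x : ∀ i, X i) :
    ∑ j ∈ cylinder A x, ∑ k ∈ cylinder B j, f k =
      (∏ i ∈ (A ∪ B)ᶜ, Fintype.card (X i) : ℕ) * ∑ k ∈ cylinder (A ∩ B) x, f k := by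
  have hswap (j k : ∀ i, X i) : j ∈ cylinder A x ∧ k ∈ cylinder B j ↔
      j ∈ cylinder (A ∪ B) (A.piecewise x k) ∧ k ∈ cylinder (A ∩ B) x := by
    simp only [mem_cylinder, Finset.piecewise]
    grind
  rw [sum_comm' hswap, mul_sum]
  simp only [sum_const, card_cylinder, nsmul_eq_mul]

/-- The operator replacing a function on the table by its average over the coordinates outside `A`,
with respect to the uniform weights; applied to `log p_M` it is `ν_A^M`. -/
def condMean (A : Finset ι) : Module.End 𝕜 ((∀ i, X i) → 𝕜) where
  toFun f x := (∏ i ∈ Aᶜ, (Fintype.card (X i) : 𝕜))⁻¹ * ∑ j ∈ cylinder A x, f j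
  map_add' f g := by ext x; simp [sum_add_distrib, mul_add]
  map_smul' c f := by ext x; simp [← mul_sum, mul_left_comm]

theorem condMean_apply (A : Finset ι) (f : (∀ i, X i) → 𝕜) (x : ∀ i, X i) :
    condMean A f x =
      (∏ i ∈ Aᶜ, (Fintype.card (X i) : 𝕜))⁻¹ * ∑ j ∈ cylinder A x, f j :=
  rfl

theorem condMean_mul_condMean [CharZero 𝕜] [∀ i, Nonempty (X i)] (A B : Finset ι) :
    (condMean A * condMean B : Module.End 𝕜 ((∀ i, X i) → 𝕜)) = condMean (A ∩ B) := by
  refine LinearMap.ext fun f => funext fun x => ?_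
  have hne (C : Finset ι) : ∏ i ∈ C, (Fintype.card (X i) : 𝕜) ≠ 0 :=
    prod_ne_zero_iff.2 fun i _ => Nat.cast_ne_zero.2 Fintype.card_ne_zero
  have hcard := prod_union_inter (s₁ := Aᶜ) (s₂ := Bᶜ) (f := fun i => (Fintype.card (X i) : 𝕜))
  rw [← compl_inter, ← compl_union] at hcard
  simp only [Module.End.mul_apply, condMean_apply, ← mul_sum, sum_cylinder_sum_cylinder,
    Nat.cast_prod]
  rw [eq_inv_mul_iff_mul_eq₀ (hne _)]
  field_simp [hne]
  rw [hcard]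

theorem nu_eq_condMean (p : (∀ i, X i) → ℝ) (L M : Finset ι) (x : ∀ i, X i) :
    nu p L M x = condMean L (fun j => Real.log (margin p M j)) x :=
  rfl

theorem mll_eq_moebiusTransform_condMean (p : (∀ i, X i) → ℝ) (L M : Finset ι) (x : ∀ i, X i) :
    mll p L M x = moebiusTransform condMean L (fun j => Real.log (margin p M j)) x := by
  simp only [mll, nu_eq_condMean, moebiusTransform_end_apply]

end Averages

theorem stmt9 (p : (∀ v, 𝔛 v) → ℝ) (hp : ∀ x, 0 < p x) (hsum : ∑ x, p x = 1)
    (L M N : Finset V) (hL : L.Nonempty) (hLM : L ⊆ M) (hMN : M ⊂ N)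
    (hcol : ∀ x : ∀ v, 𝔛 v, mll p L M x = mll p L N x) :
    (∀ Z ⊆ N, L ⊂ Z → (Z ∩ (N \ M)).Nonempty → ∀ x : ∀ v, 𝔛 v, mll p Z N x = 0) ↔
    (∀ x : ∀ v, 𝔛 v,
      ∑ Z ∈ L.powerset, (-1 : ℝ) ^ ((L \ Z).card) * nu p (Z ∪ (N \ L)) N x =
      ∑ Z ∈ L.powerset, (-1 : ℝ) ^ ((L \ Z).card) * nu p (Z ∪ (M \ L)) N x) := by
  simpa only [mll_eq_moebiusTransform_condMean, nu_eq_condMean, moebiusTransform_end_apply,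
    funext_iff, Pi.zero_apply] using
    stmt9_general condMean_mul_condMean (fun j => Real.log (margin p N j)) hLM hMN.subset
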